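/- Let Δ = {x ∈ ℝⁿ : x ≥ 0, 1ᵀx = 1} be the standard simplex, let μ ∈ ℝⁿ, R_target ∈ ℝ, and let F = Δ ∩ {x ∈ ℝⁿ : μᵀx ≥ R_target} be nonempty. Fix v ∈ ℝⁿ. (i) If μᵀΠ_Δ(v) ≥ R_target, then Π_F(v) = Π_Δ(v). (ii) If ν⋆ ≥ 0 satisfies μᵀΠ_Δ(v + ν⋆·μ) = R_target, then Π_F(v) = Π_Δ(v + ν⋆·μ). -/

import Mathlib

/-- The standard probability simplex `Δ = {x : x ≥ 0, 1ᵀx = 1}` in Euclidean space. -/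
def stdSimplex' (n : ℕ) : Set (EuclideanSpace ℝ (Fin n)) :=
  {x | (∀ i, 0 ≤ x i) ∧ (∑ i, x i) = 1}

/-!
The point `p` nearest to `v + ν • μ` in `K` minimizes the Lagrangian
`‖v - z‖ ^ 2 + 2 * ν * (R - ⟪μ, z⟫)` over `K`, because completing the square changes this function
only by a constant. If `p` is feasible and complementary slackness `ν * (⟪μ, p⟫ - R) = 0` holds,
weak duality makes `p` a nearest point to `v` in `K ∩ {x | R ≤ ⟪μ, x⟫}`. Nearest points of convex
sets being unique, it is the projection of `v`. The two claims are the cases `ν = 0` and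
`⟪μ, p⟫ = R` of complementary slackness.
-/

/-- `p` is a metric projection of `v` onto `s`, that is, a point of `s` closest to `v`. A relation
is used, rather than a map, so that neither existence nor uniqueness is presupposed. -/
def IsNearestPoint {E : Type*} [SeminormedAddCommGroup E] (s : Set E) (v p : E) : Prop :=
  p ∈ s ∧ ∀ z ∈ s, ‖v - p‖ ≤ ‖v - z‖

theorem IsNearestPoint.eq_of_convex {E : Type*} [NormedAddCommGroup E] [NormedSpace ℝ E]
    [StrictConvexSpace ℝ E] {s : Set E} {v p q : E} (hs : Convex ℝ s)
    (hp : IsNearestPoint s v p) (hq : IsNearestPoint s v q) : p = q := by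
  have hnorm : ‖v - p‖ = ‖v - q‖ := le_antisymm (hp.2 q hq.1) (hq.2 p hp.1)
  have hmid : v - midpoint ℝ p q = (1 / 2 : ℝ) • ((v - p) + (v - q)) := by
    rw [midpoint_eq_smul_add, invOf_eq_inv]
    module
  by_contra hne
  have hlt : ‖v - midpoint ℝ p q‖ < ‖v - p‖ := by
    rw [hmid, norm_midpoint_lt_iff hnorm]
    exact fun h => hne (sub_right_injective h)
  exact hlt.not_ge (hp.2 _ (hs.midpoint_mem hp.1 hq.1))

section InnerProductSpace

open scoped RealInnerProductSpace

variable {E : Type*}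

section Seminormed

variable [SeminormedAddCommGroup E] [InnerProductSpace ℝ E] {s : Set E} {μ v p : E} {R ν : ℝ}

theorem norm_sub_le_norm_sub_of_norm_add_sub_le_of_inner_le {u z : E}
    (hnorm : ‖v + u - p‖ ≤ ‖v + u - z‖) (hinner : ⟪u, p⟫ ≤ ⟪u, z⟫) : ‖v - p‖ ≤ ‖v - z‖ := by
  have hsq (x : E) : ‖v + u - x‖ ^ 2 = ‖v - x‖ ^ 2 + 2 * (⟪u, v⟫ - ⟪u, x⟫) + ‖u‖ ^ 2 := by
    rw [add_sub_right_comm, norm_add_sq_real, real_inner_comm, inner_sub_right]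
  have hnorm_sq : ‖v + u - p‖ ^ 2 ≤ ‖v + u - z‖ ^ 2 := by gcongr
  rw [hsq, hsq] at hnorm_sq
  exact le_of_sq_le_sq (by linarith) (norm_nonneg _)

theorem IsNearestPoint.inter_halfSpace (hp : IsNearestPoint s (v + ν • μ) p) (hν : 0 ≤ ν)
    (hfeasible : R ≤ ⟪μ, p⟫) (hslack : ν * (⟪μ, p⟫ - R) = 0) :
    IsNearestPoint (s ∩ {x | R ≤ ⟪μ, x⟫}) v p := by
  refine ⟨⟨hp.1, hfeasible⟩, fun z ⟨hzs, hzR⟩ =>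
    norm_sub_le_norm_sub_of_norm_add_sub_le_of_inner_le (hp.2 z hzs) ?_⟩
  calc
    ⟪ν • μ, p⟫ = ν * R := by rw [real_inner_smul_left]; linarith
    _ ≤ ν * ⟪μ, z⟫ := mul_le_mul_of_nonneg_left hzR hν
    _ = ⟪ν • μ, z⟫ := (real_inner_smul_left μ z ν).symm

end Seminormed

variable [NormedAddCommGroup E] [InnerProductSpace ℝ E]

theorem projection_onto_constrained_simplex_general {K : Set E} (hK : Convex ℝ K) {μ v q : E}
    {R : ℝ} (hq : IsNearestPoint (K ∩ {x | R ≤ ⟪μ, x⟫}) v q) :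
    (∀ p, IsNearestPoint K v p → R ≤ ⟪μ, p⟫ → q = p) ∧
      ∀ (ν : ℝ) (p : E), 0 ≤ ν → IsNearestPoint K (v + ν • μ) p → ⟪μ, p⟫ = R → q = p := by
  have hF : Convex ℝ (K ∩ {x | R ≤ ⟪μ, x⟫}) :=
    hK.inter (convex_halfSpace_ge (innerₛₗ ℝ μ).isLinear R)
  constructor
  · intro p hp hpR
    have hp' : IsNearestPoint K (v + (0 : ℝ) • μ) p := by rwa [zero_smul, add_zero]
    exact hq.eq_of_convex hF (hp'.inter_halfSpace le_rfl hpR (zero_mul _))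
  · intro ν p hν hp hpR
    exact hq.eq_of_convex hF
      (hp.inter_halfSpace hν hpR.ge (mul_eq_zero_of_right ν (sub_eq_zero.2 hpR)))

end InnerProductSpace

theorem convex_stdSimplex' (n : ℕ) : Convex ℝ (stdSimplex' n) :=
  (convex_stdSimplex ℝ (Fin n)).linear_preimage (WithLp.linearEquiv 2 ℝ (Fin n → ℝ)).toLinearMap

theorem real_inner_eq_sum_mul {ι : Type*} [Fintype ι] (x y : EuclideanSpace ℝ ι) :
    inner ℝ x y = ∑ i, x i * y i := by
  simp [PiLp.inner_apply, mul_comm]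

/-- Let `F = Δ ∩ {x : μᵀx ≥ R_target}` be nonempty, and let `Π_Δ`,
`Π_F` be the Euclidean projections onto `Δ` and `F`. For any `v`:
(i) if `μᵀ Π_Δ(v) ≥ R_target` then `Π_F(v) = Π_Δ(v)`;
(ii) if `ν⋆ ≥ 0` satisfies `μᵀ Π_Δ(v + ν⋆ μ) = R_target` then `Π_F(v) = Π_Δ(v + ν⋆ μ)`. -/
theorem projection_onto_constrained_simplex {n : ℕ}
    (μ : EuclideanSpace ℝ (Fin n)) (Rtarget : ℝ)
    (hFne : (stdSimplex' n ∩ {x | Rtarget ≤ ∑ i, μ i * x i}).Nonempty)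
    (projD : EuclideanSpace ℝ (Fin n) → EuclideanSpace ℝ (Fin n))
    (hprojD : ∀ w, projD w ∈ stdSimplex' n ∧ ∀ z ∈ stdSimplex' n, ‖w - projD w‖ ≤ ‖w - z‖)
    (projF : EuclideanSpace ℝ (Fin n) → EuclideanSpace ℝ (Fin n))
    (hprojF : ∀ w, projF w ∈ stdSimplex' n ∩ {x | Rtarget ≤ ∑ i, μ i * x i} ∧
      ∀ z ∈ stdSimplex' n ∩ {x | Rtarget ≤ ∑ i, μ i * x i}, ‖w - projF w‖ ≤ ‖w - z‖)
    (v : EuclideanSpace ℝ (Fin n)) :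
    (Rtarget ≤ (∑ i, μ i * projD v i) → projF v = projD v) ∧
      ∀ νs : ℝ, 0 ≤ νs → (∑ i, μ i * projD (v + νs • μ) i) = Rtarget →
        projF v = projD (v + νs • μ) := by
  simp only [← real_inner_eq_sum_mul] at hprojF ⊢
  exact (projection_onto_constrained_simplex_general (convex_stdSimplex' n) (hprojF v)).imp
    (fun h => h _ (hprojD v)) (fun h ν hν => h ν _ hν (hprojD (v + ν • μ)))
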